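/- Predefined reconstruction recovers the orthogonal projection onto the reconstruction space: let w : {0,…,N−1} → ℝ, W := U diag(w) D^T, and assume R̃_{sa}(i) ≠ 0 and R̃_{ww}(i) ≠ 0 for every i ∈ {0,…,K−1}. Let H be the K×K diagonal matrix with i-th diagonal entry R̃_{wa}(i)/(R̃_{sa}(i)·R̃_{ww}(i)). Then for every x in the PGS subspace generated by a, the reconstruction W H S^* x equals W (W^* W)^{−1} W^* x, the orthogonal projection of x onto the column space of W. -/

import Mathlib

open Matrix BigOperators

noncomputable section

/-- Downsampling matrix `D ∈ ℂ^{K×N}` with `N = M·K`: `D i j = 1` iff `j ≡ i (mod K)`. -/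
def Dmat (K M : ℕ) : Matrix (Fin K) (Fin (M * K)) ℂ :=
  Matrix.of fun i j => if (j : ℕ) % K = (i : ℕ) then 1 else 0

/-- The index `i + K·ℓ` viewed in `Fin (M·K)`. -/
def fold (K M : ℕ) (i : Fin K) (ℓ : Fin M) : Fin (M * K) :=
  ⟨(i : ℕ) + K * (ℓ : ℕ), by
    have hi := i.isLt
    calc (i : ℕ) + K * (ℓ : ℕ) < K + K * (ℓ : ℕ) := by omega
      _ = K * ((ℓ : ℕ) + 1) := by ring
      _ ≤ K * M := Nat.mul_le_mul_left K ℓ.isLt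
      _ = M * K := Nat.mul_comm K M⟩

/-- Sampled cross-correlation `R̃_{fg}(i) = ∑_{ℓ<M} f(i+Kℓ) g(i+Kℓ)`. -/
def Rtil (K M : ℕ) (f g : Fin (M * K) → ℝ) (i : Fin K) : ℝ :=
  ∑ ℓ : Fin M, f (fold K M i ℓ) * g (fold K M i ℓ)

/-- Sampling matrix `S^* = D diag(s) U^*`. -/
def SamplingMat (K M : ℕ) (U : Matrix (Fin (M * K)) (Fin (M * K)) ℂ)
    (s : Fin (M * K) → ℝ) : Matrix (Fin K) (Fin (M * K)) ℂ :=
  Dmat K M * Matrix.diagonal (fun j => (s j : ℂ)) * Uᴴ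

/-- Synthesis matrix `A = U diag(a) Dᵀ`. -/
def SynthesisMat (K M : ℕ) (U : Matrix (Fin (M * K)) (Fin (M * K)) ℂ)
    (a : Fin (M * K) → ℝ) : Matrix (Fin (M * K)) (Fin K) ℂ :=
  U * Matrix.diagonal (fun j => (a j : ℂ)) * (Dmat K M)ᵀ

theorem Dmat_aux (K M : ℕ) (f : Fin (M * K) → ℂ) (i k : Fin K) :
    ∑ j, Dmat K M i j * f j * Dmat K M k j =
      if i = k then ∑ l : Fin M, f (fold K M i l) else 0 := by
  rw [← (finProdFinEquiv (m := M) (n := K)).sum_comp, Fintype.sum_prod_type]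
  have h1 : ∀ (l : Fin M) (r q : Fin K),
      Dmat K M q (finProdFinEquiv (l, r)) = if r = q then 1 else 0 := by
    intro l r q
    simp [Dmat, Nat.add_mul_mod_self_left, Nat.mod_eq_of_lt r.isLt, Fin.ext_iff]
  have h2 : ∀ (l : Fin M) (r : Fin K), finProdFinEquiv (l, r) = fold K M r l := by
    intro l r
    apply Fin.ext
    simp [fold]
  simp only [h1]
  simp only [h2]
  by_cases hik : i = k
  · subst hik
    simp
  · simp [hik, Ne.symm hik]

theorem sampling_mul_synthesis (K M : ℕ) (U : Matrix (Fin (M * K)) (Fin (M * K)) ℂ)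
    (hU : U ∈ Matrix.unitaryGroup (Fin (M * K)) ℂ) (f g : Fin (M * K) → ℝ) :
    SamplingMat K M U f * SynthesisMat K M U g =
      Matrix.diagonal (fun i => ((Rtil K M f g i : ℝ) : ℂ)) := by
  have hU' : Uᴴ * U = 1 := Matrix.mem_unitaryGroup_iff'.mp hU
  have h : SamplingMat K M U f * SynthesisMat K M U g =
      Dmat K M * Matrix.diagonal (fun j => (f j : ℂ) * (g j : ℂ)) * (Dmat K M)ᵀ := by
    unfold SamplingMat SynthesisMat
    rw [← Matrix.diagonal_mul_diagonal]
    simp only [Matrix.mul_assoc]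
    rw [← Matrix.mul_assoc Uᴴ U, hU', Matrix.one_mul]
  rw [h]
  ext i k
  rw [Matrix.mul_apply]
  simp only [Matrix.mul_diagonal, Matrix.transpose_apply]
  rw [Dmat_aux K M (fun j => (f j : ℂ) * (g j : ℂ)), Matrix.diagonal_apply]
  simp [Rtil]

theorem synthesis_conjTranspose (K M : ℕ) (U : Matrix (Fin (M * K)) (Fin (M * K)) ℂ)
    (w : Fin (M * K) → ℝ) : (SynthesisMat K M U w)ᴴ = SamplingMat K M U w := by
  have hD : ((Dmat K M)ᵀ)ᴴ = Dmat K M := by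
    ext i j
    simp [Dmat, apply_ite]
  unfold SamplingMat SynthesisMat
  rw [Matrix.conjTranspose_mul, Matrix.conjTranspose_mul, hD, Matrix.diagonal_conjTranspose,
    Matrix.mul_assoc]
  congr 3
  ext j
  simp

/-- Predefined reconstruction recovers the orthogonal projection onto the
reconstruction space: with `H = diag(R̃_{wa}/(R̃_{sa}·R̃_{ww}))`, for every `x` in the
PGS subspace generated by `a`, `W H S^* x = W (W^*W)⁻¹ W^* x`. -/
theorem predefined_reconstruction_orthogonal_projection (K M : ℕ) (hK : 0 < K) (hM : 0 < M)
    (U : Matrix (Fin (M * K)) (Fin (M * K)) ℂ)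
    (hU : U ∈ Matrix.unitaryGroup (Fin (M * K)) ℂ)
    (s a w : Fin (M * K) → ℝ)
    (hRsa : ∀ i : Fin K, Rtil K M s a i ≠ 0)
    (hRww : ∀ i : Fin K, Rtil K M w w i ≠ 0) :
    ∀ x : Fin (M * K) → ℂ,
      (∃ d : Fin K → ℂ, x = (SynthesisMat K M U a).mulVec d) →
      (SynthesisMat K M U w).mulVec
        ((Matrix.diagonal (fun i : Fin K =>
            ((Rtil K M w a i / (Rtil K M s a i * Rtil K M w w i) : ℝ) : ℂ))).mulVec
          ((SamplingMat K M U s).mulVec x))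
      = (SynthesisMat K M U w
          * ((SynthesisMat K M U w)ᴴ * SynthesisMat K M U w)⁻¹
          * (SynthesisMat K M U w)ᴴ).mulVec x := by
  rintro x ⟨d, rfl⟩
  rw [synthesis_conjTranspose, sampling_mul_synthesis K M U hU]
  have hinv : (Matrix.diagonal (fun i => ((Rtil K M w w i : ℝ) : ℂ)))⁻¹ =
      Matrix.diagonal (fun i => (((Rtil K M w w i)⁻¹ : ℝ) : ℂ)) := by
    apply Matrix.inv_eq_right_inv
    rw [Matrix.diagonal_mul_diagonal, ← Matrix.diagonal_one]
    congr 1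
    ext i
    rw [← Complex.ofReal_mul, mul_inv_cancel₀ (hRww i), Complex.ofReal_one]
  rw [hinv]
  simp only [Matrix.mulVec_mulVec, Matrix.mul_assoc, sampling_mul_synthesis K M U hU,
    Matrix.diagonal_mul_diagonal]
  congr 3
  ext i
  have h1 := hRsa i
  have h2 := hRww i
  rw [← Complex.ofReal_mul, ← Complex.ofReal_mul]
  congr 1
  field_simp
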